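/- Let A₀ be a ring with a nonzero divisor t ∈ A₀. Put A := A₀[1/t], Z := (1+tA₀)^{-1}A₀ (the (t)-adic Zariskization of A₀), and A' := Z[1/t]. Then the inclusion of A₀ into the integral closure (A₀)^+_A of A₀ in A induces a ring isomorphism from the integral closure of Z in A' onto the (t)-adic Zariskization (1 + t·(A₀)^+_A)^{-1}(A₀)^+_A of (A₀)^+_A. -/

import Mathlib

set_option maxHeartbeats 1000000
set_option synthInstance.maxHeartbeats 1000000

/-- The multiplicative set `1 + I` associated to an ideal `I`. -/
def oneAddSubmonoid {A : Type*} [CommRing A] (I : Ideal A) : Submonoid A where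
  carrier := {x | ∃ i ∈ I, x = 1 + i}
  one_mem' := ⟨0, Ideal.zero_mem I, by ring⟩
  mul_mem' := by
    rintro x y ⟨i, hi, rfl⟩ ⟨j, hj, rfl⟩
    exact ⟨i + j + i * j, I.add_mem (I.add_mem hi hj) (Ideal.mul_mem_left I i hj), by ring⟩

/-- The `I`-adic Zariskization `(1+I)⁻¹A` of a ring `A`. -/
abbrev Zariskization {A : Type*} [CommRing A] (I : Ideal A) : Type _ :=
  Localization (oneAddSubmonoid I)

section

variable {A₀ : Type*} [CommRing A₀] (t : A₀)

/-- The canonical ring homomorphism `A₀[1/t] → Z[1/t]`, where `Z` is the `(t)`-adic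
Zariskization of `A₀`. -/
noncomputable def awayToZarAway :
    Localization.Away t →+*
      Localization.Away (algebraMap A₀ (Zariskization (Ideal.span {t})) t) :=
  Localization.awayLift
    ((algebraMap (Zariskization (Ideal.span {t}))
        (Localization.Away (algebraMap A₀ (Zariskization (Ideal.span {t})) t))).comp
      (algebraMap A₀ (Zariskization (Ideal.span {t})))) t
    (IsLocalization.Away.algebraMap_isUnit (algebraMap A₀ (Zariskization (Ideal.span {t})) t))

end

/-!
Put `I = tA₀`; only `A' = (1 + I)⁻¹A` matters, not the form of `A` and `I`. Localization commutes
with integral closure, so `Z⁺_{A'}` is the localization of `C = (A₀)⁺_A` at the image of `1 + I`.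
Inverting this image already inverts all of `1 + IC`. Indeed, an element `x ∈ IC` is a root of a
monic polynomial `p` of degree `n` whose other coefficients lie in `I`, so `1 + x` divides
`p(x) - p(-1) = -p(-1)`, while `(-1)ⁿ p(-1) ∈ 1 + I`.
-/

open Polynomial

section OneAddSubmonoid

variable {R : Type*} [CommRing R] {I : Ideal R}

theorem mem_oneAddSubmonoid_iff_sub_one_mem {x : R} : x ∈ oneAddSubmonoid I ↔ x - 1 ∈ I :=
  ⟨fun ⟨i, hi, hx⟩ ↦ by rwa [hx, add_sub_cancel_left],
    fun hx ↦ ⟨x - 1, hx, (add_sub_cancel 1 x).symm⟩⟩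

theorem eval_sub_pow_natDegree_mem {p : R[X]} (hp : p.Monic)
    (hI : ∀ i ≠ p.natDegree, p.coeff i ∈ I) (a : R) : p.eval a - a ^ p.natDegree ∈ I := by
  rw [eval_eq_sum_range, Finset.sum_range_succ, hp.coeff_natDegree, one_mul, add_sub_cancel_right]
  exact I.sum_mem fun i hi ↦ I.mul_mem_right _ (hI i (Finset.mem_range.mp hi).ne)

theorem neg_one_pow_mul_eval_neg_one_mem_oneAddSubmonoid {p : R[X]} (hp : p.Monic)
    (hI : ∀ i ≠ p.natDegree, p.coeff i ∈ I) :
    (-1) ^ p.natDegree * p.eval (-1) ∈ oneAddSubmonoid I := by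
  have h := I.mul_mem_left ((-1) ^ p.natDegree) (eval_sub_pow_natDegree_mem hp hI (-1))
  rwa [mul_sub, ← mul_pow, neg_one_mul, neg_neg, one_pow,
    ← mem_oneAddSubmonoid_iff_sub_one_mem] at h

variable {S : Type*} [CommRing S] [Algebra R S]

theorem sub_dvd_algebraMap_eval_of_aeval_eq_zero {p : R[X]} {x : S} (hx : aeval x p = 0) (a : R) :
    x - algebraMap R S a ∣ algebraMap R S (p.eval a) := by
  have h := sub_dvd_eval_sub x (algebraMap R S a) (p.map (algebraMap R S))
  rwa [eval_map_algebraMap, hx, zero_sub, dvd_neg, eval_map_algebraMap,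
    aeval_algebraMap_apply_eq_algebraMap_eval] at h

theorem algebraMapSubmonoid_oneAddSubmonoid_le :
    Algebra.algebraMapSubmonoid S (oneAddSubmonoid I) ≤
      oneAddSubmonoid (I.map (algebraMap R S)) := by
  rintro _ ⟨_, ⟨i, hi, rfl⟩, rfl⟩
  exact ⟨algebraMap R S i, Ideal.mem_map_of_mem _ hi, by rw [map_add, map_one]⟩

theorem exists_dvd_algebraMap_of_mem_oneAddSubmonoid_map [Algebra.IsIntegral R S] {y : S}
    (hy : y ∈ oneAddSubmonoid (I.map (algebraMap R S))) :
    ∃ r ∈ oneAddSubmonoid I, y ∣ algebraMap R S r := by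
  obtain ⟨x, hx, rfl⟩ := hy
  obtain ⟨p, hp, hpx, hpI⟩ := exists_monic_aeval_eq_zero_forall_mem_of_mem_map hx
  refine ⟨_, neg_one_pow_mul_eval_neg_one_mem_oneAddSubmonoid hp hpI, ?_⟩
  have hdvd := sub_dvd_algebraMap_eval_of_aeval_eq_zero hpx (-1)
  rw [map_neg, map_one, sub_neg_eq_add, add_comm] at hdvd
  rw [map_mul]
  exact hdvd.mul_left _

theorem isLocalization_oneAddSubmonoid_map [Algebra.IsIntegral R S] (T : Type*) [CommRing T]
    [Algebra S T] [IsLocalization (Algebra.algebraMapSubmonoid S (oneAddSubmonoid I)) T] :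
    IsLocalization (oneAddSubmonoid (I.map (algebraMap R S))) T := by
  refine IsLocalization.of_le_of_exists_dvd
    (Algebra.algebraMapSubmonoid S (oneAddSubmonoid I)) _ algebraMapSubmonoid_oneAddSubmonoid_le
    fun y hy ↦ ?_
  obtain ⟨r, hr, hdvd⟩ := exists_dvd_algebraMap_of_mem_oneAddSubmonoid_map hy
  exact ⟨_, Algebra.mem_algebraMapSubmonoid_of_mem ⟨r, hr⟩, hdvd⟩

end OneAddSubmonoid

section IntegralClosure

variable (R Z A B : Type*) [CommRing R] [CommRing Z] [CommRing A] [CommRing B]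
  [Algebra R Z] [Algebra R A] [Algebra R B] [Algebra Z B] [Algebra A B]
  [IsScalarTower R Z B] [IsScalarTower R A B]

/-- The map `R⁺_A → Z⁺_B` on integral closures induced by a commutative square of rings with
sides `R → Z → B` and `R → A → B`. -/
def integralClosureMap : integralClosure R A →ₐ[R] integralClosure Z B :=
  ((IsScalarTower.toAlgHom R A B).comp (integralClosure R A).val).codRestrict
    ((integralClosure Z B).restrictScalars R) fun c ↦ (IsIntegral.algebraMap c.2).tower_top

theorem zariskization_integralClosure_iso_general (I : Ideal R)
    [IsLocalization (oneAddSubmonoid I) Z]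
    [IsLocalization (Algebra.algebraMapSubmonoid A (oneAddSubmonoid I)) B] :
    ∃ e : integralClosure Z B ≃+* Zariskization (I.map (algebraMap R (integralClosure R A))),
      ∀ c : integralClosure R A, e (integralClosureMap R Z A B c) = algebraMap _ _ c := by
  let : Algebra (integralClosure R A) (integralClosure Z B) :=
    (integralClosureMap R Z A B).toAlgebra
  have : IsScalarTower R (integralClosure R A) (integralClosure Z B) :=
    .of_algebraMap_eq' (integralClosureMap R Z A B).comp_algebraMap.symm
  have : IsScalarTower (integralClosure R A) (integralClosure Z B) B := .of_algebraMap_eq' rfl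
  have : IsLocalization (Algebra.algebraMapSubmonoid (integralClosure R A) (oneAddSubmonoid I))
      (integralClosure Z B) :=
    IsLocalization.integralClosure (Rf := Z) (Sf := B) (oneAddSubmonoid I)
  let J := I.map (algebraMap R (integralClosure R A))
  have : IsLocalization (oneAddSubmonoid J) (integralClosure Z B) :=
    isLocalization_oneAddSubmonoid_map _
  let e := IsLocalization.algEquiv (oneAddSubmonoid J) (integralClosure Z B) (Zariskization J)
  exact ⟨e.toRingEquiv, e.commutes⟩

end IntegralClosure

section Away

variable {A₀ : Type*} [CommRing A₀] (t : A₀)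

theorem awayToZarAway_algebraMap (a : A₀) :
    awayToZarAway t (algebraMap A₀ (Localization.Away t) a) = algebraMap A₀ _ a :=
  IsLocalization.lift_eq _ _

noncomputable instance awayToZarAwayAlgebra : Algebra (Localization.Away t)
    (Localization.Away (algebraMap A₀ (Zariskization (Ideal.span {t})) t)) :=
  (awayToZarAway t).toAlgebra

instance isScalarTower_awayToZarAway : IsScalarTower A₀ (Localization.Away t)
    (Localization.Away (algebraMap A₀ (Zariskization (Ideal.span {t})) t)) :=
  .of_algebraMap_eq fun a ↦ (awayToZarAway_algebraMap t a).symm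

instance isLocalization_awayToZarAway : IsLocalization
    (Algebra.algebraMapSubmonoid (Localization.Away t) (oneAddSubmonoid (Ideal.span {t})))
    (Localization.Away (algebraMap A₀ (Zariskization (Ideal.span {t})) t)) := by
  let Z := Zariskization (Ideal.span {t})
  have : IsLocalization (Algebra.algebraMapSubmonoid Z (Submonoid.powers t))
      (Localization.Away (algebraMap A₀ Z t)) := by
    rw [Algebra.algebraMapSubmonoid, Submonoid.map_powers]
    infer_instance
  exact IsLocalization.commutes (Localization.Away t) Z _ (Submonoid.powers t) _

end Away

/-- Let `A₀` be a ring with a nonzero divisor `t`, `A := A₀[1/t]`,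
`Z := (1+tA₀)⁻¹A₀` the `(t)`-adic Zariskization and `A' := Z[1/t]`.  Then the inclusion of
`A₀` into the integral closure `C := (A₀)⁺_A` of `A₀` in `A` induces a ring isomorphism from
the integral closure of `Z` in `A'` onto the `(t)`-adic Zariskization `(1+tC)⁻¹C` of `C`;
the isomorphism is compatible with the canonical maps from `C` to both sides. -/
theorem zariskization_integralClosure_iso
    (A₀ : Type*) [CommRing A₀] (t : A₀) (ht : t ∈ nonZeroDivisors A₀) :
    ∃ hmem : ∀ c : ↥(integralClosure A₀ (Localization.Away t)),
        awayToZarAway t (c : Localization.Away t) ∈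
          integralClosure (Zariskization (Ideal.span {t}))
            (Localization.Away (algebraMap A₀ (Zariskization (Ideal.span {t})) t)),
      ∃ e : ↥(integralClosure (Zariskization (Ideal.span {t}))
              (Localization.Away (algebraMap A₀ (Zariskization (Ideal.span {t})) t))) ≃+*
            Zariskization (Ideal.span
              {algebraMap A₀ ↥(integralClosure A₀ (Localization.Away t)) t}),
        ∀ c : ↥(integralClosure A₀ (Localization.Away t)),
          e ⟨awayToZarAway t (c : Localization.Away t), hmem c⟩ =
            algebraMap ↥(integralClosure A₀ (Localization.Away t))
              (Zariskization (Ideal.span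
                {algebraMap A₀ ↥(integralClosure A₀ (Localization.Away t)) t})) c := by
  have h := zariskization_integralClosure_iso_general A₀ (Zariskization (Ideal.span {t}))
    (Localization.Away t) (Localization.Away (algebraMap A₀ (Zariskization (Ideal.span {t})) t))
    (Ideal.span {t})
  rw [Ideal.map_span, Set.image_singleton] at h
  exact ⟨fun c ↦ (integralClosureMap A₀ _ _ _ c).2, h⟩
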